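/- arXiv:0811.3530 — 4 statements merged into one kernel-verified Lean document; each statement's English description precedes it below -/
import Mathlib

section
/- Let S ∈ ℝ^{n×n} be skew-symmetric, let H ∈ ℝ^{m×n} be such that the pair (H,S) is observable, and let Γ ∈ ℝ^{p×p} be a connected interconnection. Let r ∈ ℝ^p satisfy rᵀΓ = 0 and rᵀ1 = 1. Then for every initial vector ξ(0) ∈ ℝ^{pn}, the solution ξ(t) = exp(t(I_p ⊗ S + Γ ⊗ HᵀH)) ξ(0) of the coupled array ξ̇_i = Sξ_i + HᵀH Σ_j γ_ij(ξ_j − ξ_i) satisfies |ξ(t) − (1rᵀ ⊗ exp(tS)) ξ(0)| → 0 as t → ∞; in particular the blocks ξ_i(t) synchronize to ξ̄(t) = (rᵀ ⊗ exp(tS)) ξ(0). -/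
open Matrix Filter Topology
open scoped Kronecker

/-- `Γ` is an interconnection: off-diagonal entries are nonnegative and each diagonal
entry is minus the sum of the other entries in its row (equivalently, rows sum to zero). -/
def IsInterconnection {p : ℕ} (Γ : Matrix (Fin p) (Fin p) ℝ) : Prop :=
  (∀ i j, i ≠ j → 0 ≤ Γ i j) ∧ ∀ i, ∑ j, Γ i j = 0

/-- `Γ` is a connected interconnection: it is an interconnection and its graph
(with an edge `(i, j)` whenever `Γ i j > 0`) has a node reachable by a directed
path from every other node. -/
def IsConnectedInterconnection {p : ℕ} (Γ : Matrix (Fin p) (Fin p) ℝ) : Prop :=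
  IsInterconnection Γ ∧
    ∃ k : Fin p, ∀ i : Fin p, Relation.ReflTransGen (fun a b => 0 < Γ a b) i k

/-- All eigenvalues have negative real part. -/
def Hurw {ι : Type*} [Fintype ι] (M : Matrix ι ι ℂ) : Prop :=
  ∀ (μ : ℂ) (v : ι → ℂ), v ≠ 0 → M *ᵥ v = μ • v → μ.re < 0

open scoped Matrix.Norms.Operator in
theorem hasSum_exp_mulVec {ι : Type*} [Fintype ι] [DecidableEq ι] (M : Matrix ι ι ℂ) (v : ι → ℂ) :
    HasSum (fun k : ℕ => ((k.factorial : ℂ)⁻¹) • ((M ^ k) *ᵥ v)) (NormedSpace.exp M *ᵥ v) := by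
  have h := NormedSpace.exp_series_hasSum_exp' (𝕂 := ℂ) M
  have hc : Continuous (fun A : Matrix ι ι ℂ => A *ᵥ v) := by fun_prop
  have := h.map (Matrix.mulVecBilin ℂ ℂ |>.flip v : Matrix ι ι ℂ →ₗ[ℂ] (ι → ℂ)).toAddMonoidHom hc
  convert this using 1
  · ext k : 1
    simp
  · rfl

open scoped Matrix.Norms.Operator in
theorem exp_scalar_add {ι : Type*} [Fintype ι] [DecidableEq ι] (c : ℂ) (N : Matrix ι ι ℂ) :
    NormedSpace.exp (c • (1 : Matrix ι ι ℂ) + N) = Complex.exp c • NormedSpace.exp N := by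
  rw [Matrix.exp_add_of_commute]
  · have := NormedSpace.algebraMap_exp_comm (𝕂 := ℂ) (𝔸 := Matrix ι ι ℂ) c
    rw [Algebra.algebraMap_eq_smul_one, Algebra.algebraMap_eq_smul_one] at this
    have h2 : NormedSpace.exp (c • (1 : Matrix ι ι ℂ)) = Complex.exp c • 1 := by
      rw [Complex.exp_eq_exp_ℂ]; exact this.symm
    rw [h2, smul_mul_assoc, one_mul]
  · exact (Commute.one_left N).smul_left c

theorem exp_gen {ι : Type*} [Fintype ι] [DecidableEq ι] (M : Matrix ι ι ℂ) (μ : ℂ) (k : ℕ)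
    (v : ι → ℂ) (h : ((M - μ • (1 : Matrix ι ι ℂ)) ^ k) *ᵥ v = 0) (t : ℂ) :
    NormedSpace.exp (t • M) *ᵥ v = ∑ j ∈ Finset.range k,
      (Complex.exp (t * μ) * t ^ j * ((j.factorial : ℂ)⁻¹)) •
        (((M - μ • (1 : Matrix ι ι ℂ)) ^ j) *ᵥ v) := by
  set N := M - μ • (1 : Matrix ι ι ℂ) with hN
  have hM : t • M = (t * μ) • (1 : Matrix ι ι ℂ) + t • N := by
    rw [hN, smul_sub, smul_smul]; abel
  rw [hM, exp_scalar_add, Matrix.smul_mulVec]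
  have h1 := hasSum_exp_mulVec (t • N) v
  have h2 : HasSum (fun k : ℕ => ((k.factorial : ℂ)⁻¹) • (((t • N) ^ k) *ᵥ v))
      (∑ k ∈ Finset.range k, ((k.factorial : ℂ)⁻¹) • (((t • N) ^ k) *ᵥ v)) := by
    apply hasSum_sum_of_ne_finset_zero
    intro b hb
    have : k ≤ b := by simpa using hb
    obtain ⟨c, rfl⟩ := Nat.exists_eq_add_of_le' this
    rw [smul_pow, pow_add N, Matrix.smul_mulVec, ← Matrix.mulVec_mulVec, h]
    simp
  rw [h1.unique h2, Finset.smul_sum]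
  refine Finset.sum_congr rfl fun j _ => ?_
  rw [smul_pow, Matrix.smul_mulVec, smul_smul, smul_smul]
  ring_nf

theorem decay (μ : ℂ) (hμ : μ.re < 0) (j : ℕ) (c : ℂ) :
    Tendsto (fun t : ℝ => Complex.exp ((t : ℂ) * μ) * (t : ℂ) ^ j * c) atTop (𝓝 0) := by
  suffices h : Tendsto (fun t : ℝ => Complex.exp ((t : ℂ) * μ) * (t : ℂ) ^ j) atTop (𝓝 0) by
    simpa using h.mul_const c
  rw [tendsto_zero_iff_norm_tendsto_zero]
  have hb : 0 < -μ.re := by linarith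
  have h1 := (Real.tendsto_pow_mul_exp_neg_atTop_nhds_zero j).comp
    (tendsto_id.const_mul_atTop hb)
  have h2 := h1.const_mul (((-μ.re) ^ j)⁻¹)
  rw [mul_zero] at h2
  refine h2.congr' ?_
  filter_upwards [eventually_ge_atTop 0] with t ht
  have hne : (-μ.re) ^ j ≠ 0 := by positivity
  simp only [Function.comp, id, norm_mul, norm_pow, Complex.norm_exp, Complex.norm_real,
    Real.norm_of_nonneg ht, mul_pow]
  field_simp
  simp [mul_comm]

/-- induction over generalized eigenvectors of a Hurwitz matrix -/
theorem gen_induction {ι : Type*} [Fintype ι] [DecidableEq ι] (M : Matrix ι ι ℂ) (hM : Hurw M)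
    (Q : (ι → ℂ) → Prop) (h0 : Q 0) (hadd : ∀ x y, Q x → Q y → Q (x + y))
    (hgen : ∀ (μ : ℂ) (k : ℕ) (v : ι → ℂ), μ.re < 0 →
      ((M - μ • (1 : Matrix ι ι ℂ)) ^ k) *ᵥ v = 0 → Q v) (v : ι → ℂ) : Q v := by
  have hv : v ∈ ⨆ μ : ℂ, Module.End.maxGenEigenspace (Matrix.toLin' M) μ := by
    rw [Module.End.iSup_maxGenEigenspace_eq_top]; trivial
  induction hv using Submodule.iSup_induction' with
  | zero => exact h0
  | add x y _ _ hx hy => exact hadd x y hx hy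
  | mem μ v hv =>
    rw [Module.End.mem_maxGenEigenspace] at hv
    obtain ⟨k, hk⟩ := hv
    have hk' : ((M - μ • (1 : Matrix ι ι ℂ)) ^ k) *ᵥ v = 0 := by
      rw [← hk, Module.End.one_eq_id, ← Matrix.toLin'_one, ← map_smul, ← map_sub, ← Matrix.toLin'_pow,
        Matrix.toLin'_apply]
    by_cases hμ : μ.re < 0
    · exact hgen μ k v hμ hk'
    · have : v = 0 := by
        clear hk
        induction k with
        | zero => simpa using hk'
        | succ k ih =>
          apply ih
          by_contra hne
          refine hμ (hM μ _ hne ?_)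
          rw [pow_succ', ← Matrix.mulVec_mulVec, Matrix.sub_mulVec, sub_eq_zero,
            Matrix.smul_mulVec, Matrix.one_mulVec] at hk'
          exact hk'
      rw [this]; exact h0

theorem hurw_tendsto {ι : Type*} [Fintype ι] [DecidableEq ι] (M : Matrix ι ι ℂ) (hM : Hurw M)
    (v : ι → ℂ) :
    Tendsto (fun t : ℝ => NormedSpace.exp ((t : ℂ) • M) *ᵥ v) atTop (𝓝 0) := by
  refine gen_induction M hM
    (fun v => Tendsto (fun t : ℝ => NormedSpace.exp ((t : ℂ) • M) *ᵥ v) atTop (𝓝 0))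
    ?_ ?_ ?_ v
  · simp
  · intro x y hx hy
    simpa [Matrix.mulVec_add] using hx.add hy
  · intro μ k v hμ hk
    simp_rw [exp_gen M μ k v hk]
    rw [← Finset.sum_const_zero (s := Finset.range k)]
    refine tendsto_finsetSum _ fun j _ => ?_
    simpa using (decay μ hμ j _).smul_const (((M - μ • (1 : Matrix ι ι ℂ)) ^ j) *ᵥ v)

theorem hurw_transpose {ι : Type*} [Fintype ι] [DecidableEq ι] (M : Matrix ι ι ℂ) (hM : Hurw M) :
    Hurw Mᵀ := by
  intro μ v hv h
  have h1 : (Mᵀ - μ • (1 : Matrix ι ι ℂ)).det = 0 := by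
    rw [← Matrix.exists_mulVec_eq_zero_iff]
    exact ⟨v, hv, by rw [Matrix.sub_mulVec, h, Matrix.smul_mulVec, Matrix.one_mulVec, sub_self]⟩
  have h2 : (M - μ • (1 : Matrix ι ι ℂ)).det = 0 := by
    rw [← Matrix.det_transpose, ← h1]; simp
  rw [← Matrix.exists_mulVec_eq_zero_iff] at h2
  obtain ⟨w, hw, hw2⟩ := h2
  refine hM μ w hw ?_
  rw [Matrix.sub_mulVec, Matrix.smul_mulVec, Matrix.one_mulVec, sub_eq_zero] at hw2
  exact hw2

theorem edge_max {p : ℕ} (Γ : Matrix (Fin p) (Fin p) ℝ) (hΓ : IsInterconnection Γ)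
    (x : Fin p → ℝ) (hx : Γ *ᵥ x = 0) (i j : Fin p) (hij : 0 < Γ i j) (hmax : ∀ l, x l ≤ x i) :
    x j = x i := by
  have h1 : ∑ l, Γ i l * (x i - x l) = 0 := by
    have h2 := congrFun hx i
    simp only [Matrix.mulVec, dotProduct, Pi.zero_apply] at h2
    simp_rw [mul_sub]
    rw [Finset.sum_sub_distrib, ← Finset.sum_mul, hΓ.2 i, h2]; simp
  have h3 := (Finset.sum_eq_zero_iff_of_nonneg (fun l _ => by
    by_cases h : i = l
    · subst h; simp
    · exact mul_nonneg (hΓ.1 i l h) (sub_nonneg.2 (hmax l)))).1 h1 j (Finset.mem_univ _)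
  rcases mul_eq_zero.1 h3 with h | h
  · exact absurd h hij.ne'
  · linarith

theorem root_max {p : ℕ} (Γ : Matrix (Fin p) (Fin p) ℝ) (hΓ : IsInterconnection Γ)
    (k : Fin p) (hk : ∀ i : Fin p, Relation.ReflTransGen (fun a b => 0 < Γ a b) i k)
    (x : Fin p → ℝ) (hx : Γ *ᵥ x = 0) (l : Fin p) : x l ≤ x k := by
  have : Nonempty (Fin p) := ⟨k⟩
  obtain ⟨i, hi⟩ := Finite.exists_max x
  have : ∀ j, Relation.ReflTransGen (fun a b => 0 < Γ a b) i j → x j = x i := by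
    intro j hj
    induction hj with
    | refl => rfl
    | tail _ hbc ih =>
      rw [edge_max Γ hΓ x hx _ _ hbc (by rw [ih]; exact hi), ih]
  rw [this k (hk i)]
  exact hi l

theorem ker_const {p : ℕ} (Γ : Matrix (Fin p) (Fin p) ℝ) (hΓ : IsInterconnection Γ)
    (k : Fin p) (hk : ∀ i : Fin p, Relation.ReflTransGen (fun a b => 0 < Γ a b) i k)
    (x : Fin p → ℝ) (hx : Γ *ᵥ x = 0) (l : Fin p) : x l = x k := by
  apply le_antisymm (root_max Γ hΓ k hk x hx l)
  have := root_max Γ hΓ k hk (-x) (by rw [Matrix.mulVec_neg, hx, neg_zero]) l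
  simpa using this

theorem map_mulVec_re {ι κ : Type*} [Fintype κ] (M : Matrix ι κ ℝ) (x : κ → ℂ) (i : ι) :
    ((M.map Complex.ofRealHom *ᵥ x) i).re = (M *ᵥ fun l => (x l).re) i := by
  simp [Matrix.mulVec, dotProduct]

theorem map_mulVec_im {ι κ : Type*} [Fintype κ] (M : Matrix ι κ ℝ) (x : κ → ℂ) (i : ι) :
    ((M.map Complex.ofRealHom *ᵥ x) i).im = (M *ᵥ fun l => (x l).im) i := by
  simp [Matrix.mulVec, dotProduct]

theorem gersh {p : ℕ} (Γ : Matrix (Fin p) (Fin p) ℝ) (hΓ : IsInterconnection Γ)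
    (μ : ℂ) (v : Fin p → ℂ) (hv : v ≠ 0) (h : Γ.map Complex.ofRealHom *ᵥ v = μ • v) :
    μ.re < 0 ∨ μ = 0 := by
  have he : Module.End.HasEigenvalue (Matrix.toLin' (Γ.map Complex.ofRealHom)) μ :=
    Module.End.hasEigenvalue_of_hasEigenvector (x := v)
      ⟨Module.End.mem_eigenspace_iff.2 (by rw [Matrix.toLin'_apply, h]), hv⟩
  obtain ⟨k, hk⟩ := eigenvalue_mem_ball he
  have hs : ∑ j ∈ Finset.univ.erase k, ‖(Γ.map Complex.ofRealHom) k j‖ = - Γ k k := by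
    have h1 : ∑ j ∈ Finset.univ.erase k, ‖(Γ.map Complex.ofRealHom) k j‖
        = ∑ j ∈ Finset.univ.erase k, Γ k j := by
      refine Finset.sum_congr rfl fun j hj => ?_
      have : 0 ≤ Γ k j := hΓ.1 k j (Finset.ne_of_mem_erase hj).symm
      simp [abs_of_nonneg this]
    have h2 := hΓ.2 k
    rw [← Finset.add_sum_erase _ _ (Finset.mem_univ k)] at h2
    rw [h1]; linarith
  rw [hs, mem_closedBall_iff_norm] at hk
  have ha : 0 ≤ - Γ k k := (norm_nonneg _).trans hk
  have hsq : ‖μ - (Γ.map Complex.ofRealHom) k k‖ ^ 2 ≤ (- Γ k k) ^ 2 := by gcongr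
  rw [← Complex.normSq_eq_norm_sq, Complex.normSq_apply] at hsq
  simp at hsq
  by_cases hr : μ.re < 0
  · exact Or.inl hr
  · right
    push Not at hr
    have h1 := mul_nonneg ha hr
    have h2 : μ.re * μ.re + μ.im * μ.im ≤ 0 := by nlinarith
    have h3 : μ.re = 0 := by nlinarith [mul_self_nonneg μ.re, mul_self_nonneg μ.im]
    have h4 : μ.im = 0 := by nlinarith [mul_self_nonneg μ.re, mul_self_nonneg μ.im]
    exact Complex.ext h3 h4

theorem hurw_gamma {p : ℕ} (Γ : Matrix (Fin p) (Fin p) ℝ) (hΓ : IsConnectedInterconnection Γ)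
    (r : Fin p → ℝ) (hr : r ᵥ* Γ = 0) (hr1 : ∑ i, r i = 1) :
    Hurw ((Γ - vecMulVec (fun _ => (1 : ℝ)) r).map Complex.ofRealHom) := by
  intro μ x hx h
  obtain ⟨hI, k, hk⟩ := hΓ
  set s : ℂ := ∑ j, (r j : ℂ) * x j with hs
  have hrow : ∀ i, (Γ.map Complex.ofRealHom *ᵥ x) i - s = μ * x i := by
    intro i
    have := congrFun h i
    simp only [Matrix.mulVec, dotProduct, Matrix.map_apply, Matrix.sub_apply, vecMulVec_apply,
      one_mul, map_sub, sub_mul, Finset.sum_sub_distrib, Pi.smul_apply, smul_eq_mul,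
      Complex.ofRealHom_eq_coe] at this
    simp only [Matrix.mulVec, dotProduct, Matrix.map_apply, Complex.ofRealHom_eq_coe, hs]
    exact this
  have hz : ∑ i, (r i : ℂ) * (Γ.map Complex.ofRealHom *ᵥ x) i = 0 := by
    simp only [Matrix.mulVec, dotProduct, Matrix.map_apply, Complex.ofRealHom_eq_coe,
      Finset.mul_sum]
    rw [Finset.sum_comm]
    refine Finset.sum_eq_zero fun j _ => ?_
    have := congrFun hr j
    simp only [Matrix.vecMul, dotProduct, Pi.zero_apply] at this
    have h2 : ∑ i, (r i : ℂ) * (Γ i j : ℂ) = 0 := by exact_mod_cast this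
    simp_rw [← mul_assoc]
    rw [← Finset.sum_mul, h2, zero_mul]
  have hr1' : ∑ i, (r i : ℂ) = 1 := by exact_mod_cast hr1
  have hkey : -s = μ * s := by
    have h1 : ∑ i, (r i : ℂ) * ((Γ.map Complex.ofRealHom *ᵥ x) i - s)
        = ∑ i, (r i : ℂ) * (μ * x i) := Finset.sum_congr rfl fun i _ => by rw [hrow]
    simp_rw [mul_sub] at h1
    rw [Finset.sum_sub_distrib, hz, ← Finset.sum_mul, hr1', one_mul, zero_sub] at h1
    rw [h1, hs, Finset.mul_sum]
    exact Finset.sum_congr rfl fun i _ => by ring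
  by_cases hs0 : s = 0
  · have hΓx : Γ.map Complex.ofRealHom *ᵥ x = μ • x := by
      ext i
      have := hrow i
      rw [hs0, sub_zero] at this
      simpa using this
    rcases gersh Γ hI μ x hx hΓx with h1 | h1
    · exact h1
    · exfalso
      rw [h1, zero_smul] at hΓx
      have hre : Γ *ᵥ (fun l => (x l).re) = 0 := by
        ext i; rw [← map_mulVec_re, hΓx]; simp
      have him : Γ *ᵥ (fun l => (x l).im) = 0 := by
        ext i; rw [← map_mulVec_im, hΓx]; simp
      have hc : ∀ l, x l = x k := fun l =>
        Complex.ext (ker_const Γ hI k hk _ hre l) (ker_const Γ hI k hk _ him l)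
      have : s = x k := by
        rw [hs]
        simp_rw [hc]
        rw [← Finset.sum_mul, hr1', one_mul]
      apply hx
      ext l
      rw [hc l, ← this, hs0]; rfl
  · have : μ = -1 := by
      have : (μ + 1) * s = 0 := by linear_combination -hkey
      rcases mul_eq_zero.1 this with h | h
      · linear_combination h
      · exact absurd h hs0
    rw [this]; simp

open scoped Matrix.Norms.Operator in
theorem exp_map_ofReal {ι : Type*} [Fintype ι] [DecidableEq ι] (M : Matrix ι ι ℝ) (t : ℝ) :
    (NormedSpace.exp (t • M)).map Complex.ofRealHom
      = NormedSpace.exp ((t : ℂ) • M.map Complex.ofRealHom) := by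
  have hc : Continuous (Complex.ofRealHom.mapMatrix : Matrix ι ι ℝ →+* Matrix ι ι ℂ) := by
    change Continuous (fun M : Matrix ι ι ℝ => M.map Complex.ofRealHom)
    exact continuous_id.matrix_map Complex.continuous_ofReal
  have := NormedSpace.map_exp (Complex.ofRealHom.mapMatrix : Matrix ι ι ℝ →+* Matrix ι ι ℂ) hc
    (t • M)
  have h2 : (t : ℂ) • M.map Complex.ofRealHom = Complex.ofRealHom.mapMatrix (t • M) := by
    ext i j; simp
  rw [h2]
  exact this

open scoped Matrix.Norms.Operator in
theorem exp_one_kron (n p : ℕ) (M : Matrix (Fin n) (Fin n) ℝ) :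
    NormedSpace.exp ((1 : Matrix (Fin p) (Fin p) ℝ) ⊗ₖ M)
      = (1 : Matrix (Fin p) (Fin p) ℝ) ⊗ₖ NormedSpace.exp M := by
  let f : Matrix (Fin n) (Fin n) ℝ →+* Matrix (Fin p × Fin n) (Fin p × Fin n) ℝ :=
    { toFun := fun M => (1 : Matrix (Fin p) (Fin p) ℝ) ⊗ₖ M
      map_one' := Matrix.one_kronecker_one
      map_mul' := fun A B => by rw [← Matrix.mul_kronecker_mul, one_mul]
      map_zero' := Matrix.kronecker_zero _
      map_add' := fun A B => Matrix.kronecker_add _ _ _ }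
  have hc : Continuous f := by
    refine continuous_matrix fun i j => ?_
    change Continuous fun M : Matrix (Fin n) (Fin n) ℝ =>
      (1 : Matrix (Fin p) (Fin p) ℝ) i.1 j.1 * M i.2 j.2
    exact continuous_const.mul (continuous_id.matrix_elem _ _)
  exact (NormedSpace.map_exp f hc M).symm

open scoped Matrix.Norms.Operator in
theorem semiconj_exp {ι : Type*} [Fintype ι] [DecidableEq ι] (X A B : Matrix ι ι ℝ)
    (h : X * A = B * X) (t : ℝ) :
    X * NormedSpace.exp (t • A) = NormedSpace.exp (t • B) * X := by
  have h2 : SemiconjBy X (t • A) (t • B) := by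
    simp [SemiconjBy, h]
  exact h2.exp_right

theorem skew_dot {n : ℕ} (S : Matrix (Fin n) (Fin n) ℝ) (hS : S + Sᵀ = 0) (x : Fin n → ℝ) :
    x ⬝ᵥ (S *ᵥ x) = 0 := by
  have h1 : x ⬝ᵥ (Sᵀ *ᵥ x) = x ⬝ᵥ (S *ᵥ x) := by
    rw [Matrix.dotProduct_mulVec, Matrix.vecMul_transpose, dotProduct_comm]
  have h2 : x ⬝ᵥ ((S + Sᵀ) *ᵥ x) = 0 := by rw [hS]; simp
  rw [Matrix.add_mulVec, dotProduct_add, h1] at h2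
  linarith

theorem gram_dot {n m : ℕ} (H : Matrix (Fin m) (Fin n) ℝ) (x y : Fin n → ℝ) :
    x ⬝ᵥ ((Hᵀ * H) *ᵥ y) = (H *ᵥ x) ⬝ᵥ (H *ᵥ y) := by
  rw [← Matrix.mulVec_mulVec, Matrix.dotProduct_mulVec, Matrix.vecMul_transpose]

theorem dot_self_nonneg' {n : ℕ} (x : Fin n → ℝ) : 0 ≤ x ⬝ᵥ x :=
  Finset.sum_nonneg fun i _ => mul_self_nonneg (x i)

theorem key_obs (n m : ℕ) (S : Matrix (Fin n) (Fin n) ℝ) (H : Matrix (Fin m) (Fin n) ℝ)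
    (hS : S + Sᵀ = 0)
    (hobs : ∀ x : Fin n → ℝ,
      (∀ t : ℝ, 0 ≤ t → H *ᵥ (NormedSpace.exp (t • S) *ᵥ x) = 0) → x = 0)
    (μ l : ℂ) (hμ : 0 ≤ μ.re) (hl : l.re < 0) (η : Fin n → ℂ)
    (h : S.map Complex.ofRealHom *ᵥ η + l • ((Hᵀ * H).map Complex.ofRealHom *ᵥ η) = μ • η) :
    η = 0 := by
  set x : Fin n → ℝ := fun k => (η k).re with hx
  set y : Fin n → ℝ := fun k => (η k).im with hy
  have hre : S *ᵥ x + (l.re • ((Hᵀ * H) *ᵥ x) - l.im • ((Hᵀ * H) *ᵥ y))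
      = μ.re • x - μ.im • y := by
    ext k
    have := congrArg Complex.re (congrFun h k)
    simp only [Pi.add_apply, Pi.smul_apply, smul_eq_mul, Complex.add_re, Complex.mul_re,
      map_mulVec_re, map_mulVec_im] at this
    simpa using this
  have him : S *ᵥ y + (l.re • ((Hᵀ * H) *ᵥ y) + l.im • ((Hᵀ * H) *ᵥ x))
      = μ.re • y + μ.im • x := by
    ext k
    have := congrArg Complex.im (congrFun h k)
    simp only [Pi.add_apply, Pi.smul_apply, smul_eq_mul, Complex.add_im, Complex.mul_im,
      map_mulVec_re, map_mulVec_im] at this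
    simpa using this
  have e1 := congrArg (fun z => x ⬝ᵥ z) hre
  have e2 := congrArg (fun z => y ⬝ᵥ z) him
  simp only [dotProduct_add, dotProduct_sub, dotProduct_smul, skew_dot S hS, gram_dot,
    smul_eq_mul] at e1 e2
  rw [dotProduct_comm (H *ᵥ y) (H *ᵥ x), dotProduct_comm y x] at e2
  have n1 := dot_self_nonneg' x
  have n2 := dot_self_nonneg' y
  have n3 := dot_self_nonneg' (H *ᵥ x)
  have n4 := dot_self_nonneg' (H *ᵥ y)
  have e3 : l.re * ((H *ᵥ x) ⬝ᵥ (H *ᵥ x) + (H *ᵥ y) ⬝ᵥ (H *ᵥ y))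
      = μ.re * (x ⬝ᵥ x + y ⬝ᵥ y) := by linarith
  have e4 : (H *ᵥ x) ⬝ᵥ (H *ᵥ x) + (H *ᵥ y) ⬝ᵥ (H *ᵥ y) = 0 := by
    have : 0 ≤ μ.re * (x ⬝ᵥ x + y ⬝ᵥ y) := by positivity
    nlinarith
  have hHx : H *ᵥ x = 0 := dotProduct_self_eq_zero.1 (by linarith)
  have hHy : H *ᵥ y = 0 := dotProduct_self_eq_zero.1 (by linarith)
  have hHη : H.map Complex.ofRealHom *ᵥ η = 0 := by
    ext i
    apply Complex.ext
    · rw [map_mulVec_re]; exact congrFun hHx i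
    · rw [map_mulVec_im]; exact congrFun hHy i
  have hSη : S.map Complex.ofRealHom *ᵥ η = μ • η := by
    rw [← h, Matrix.map_mul, ← Matrix.mulVec_mulVec, hHη]; simp
  have hexp : ∀ t : ℝ, (H * NormedSpace.exp (t • S)).map Complex.ofRealHom *ᵥ η = 0 := by
    intro t
    rw [Matrix.map_mul, exp_map_ofReal, ← Matrix.mulVec_mulVec, exp_gen _ μ 1 η]
    · simp [Matrix.mulVec_smul, hHη]
    · rw [pow_one, Matrix.sub_mulVec, hSη, Matrix.smul_mulVec, Matrix.one_mulVec, sub_self]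
  have hx0 : x = 0 := hobs x fun t _ => by
    rw [Matrix.mulVec_mulVec]
    ext i
    rw [hx, ← map_mulVec_re, hexp]; simp
  have hy0 : y = 0 := hobs y fun t _ => by
    rw [Matrix.mulVec_mulVec]
    ext i
    rw [hy, ← map_mulVec_im, hexp]; simp
  ext k
  exact Complex.ext (congrFun hx0 k) (congrFun hy0 k)

theorem hurw_array (n m p : ℕ) (S : Matrix (Fin n) (Fin n) ℝ) (H : Matrix (Fin m) (Fin n) ℝ)
    (hS : S + Sᵀ = 0)
    (hobs : ∀ x : Fin n → ℝ,
      (∀ t : ℝ, 0 ≤ t → H *ᵥ (NormedSpace.exp (t • S) *ᵥ x) = 0) → x = 0)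
    (G : Matrix (Fin p) (Fin p) ℝ) (hG : Hurw (G.map Complex.ofRealHom)) :
    Hurw (((1 : Matrix (Fin p) (Fin p) ℝ) ⊗ₖ S + G ⊗ₖ (Hᵀ * H)).map Complex.ofRealHom) := by
  intro μ v hv h
  by_contra hμ
  push Not at hμ
  apply hv
  set K := Hᵀ * H with hK
  let η : (Fin p → ℂ) → Fin n → ℂ := fun w k => ∑ i, w i * v (i, k)
  have hrow : ∀ i k, ∑ l, (S k l : ℂ) * v (i, l) + ∑ j, ∑ l, (G i j : ℂ) * (K k l : ℂ) * v (j, l)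
      = μ * v (i, k) := by
    intro i k
    have := congrFun h (i, k)
    simp only [Matrix.mulVec, dotProduct, Matrix.map_apply, Matrix.add_apply,
      Matrix.kroneckerMap_apply, Fintype.sum_prod_type, map_add, map_mul, add_mul,
      Finset.sum_add_distrib, Pi.smul_apply, smul_eq_mul, Complex.ofRealHom_eq_coe,
      Matrix.one_apply] at this
    rw [← this]
    congr 1
    rw [Finset.sum_eq_single i]
    · simp
    · intro b _ hb
      simp [hb.symm]
    · simp
  have hη : ∀ w, S.map Complex.ofRealHom *ᵥ η w
      + K.map Complex.ofRealHom *ᵥ η ((G.map Complex.ofRealHom)ᵀ *ᵥ w) = μ • η w := by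
    intro w
    ext k
    have h1 : ∑ i, w i * (∑ l, (S k l : ℂ) * v (i, l)
        + ∑ j, ∑ l, (G i j : ℂ) * (K k l : ℂ) * v (j, l)) = ∑ i, w i * (μ * v (i, k)) :=
      Finset.sum_congr rfl fun i _ => by rw [hrow]
    simp only [mul_add, Finset.sum_add_distrib] at h1
    simp only [Pi.add_apply, Pi.smul_apply, smul_eq_mul, Matrix.mulVec, dotProduct,
      Matrix.map_apply, Matrix.transpose_apply, Complex.ofRealHom_eq_coe, η]
    convert h1 using 1
    · congr 1
      · simp only [Finset.mul_sum]
        rw [Finset.sum_comm]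
        exact Finset.sum_congr rfl fun i _ => Finset.sum_congr rfl fun l _ => by ring
      · simp only [Finset.mul_sum, Finset.sum_mul]
        rw [Finset.sum_comm]
        conv_rhs => rw [Finset.sum_comm]
        refine Finset.sum_congr rfl fun j _ => ?_
        rw [Finset.sum_comm]
        exact Finset.sum_congr rfl fun i _ => Finset.sum_congr rfl fun l _ => by ring
    · rw [Finset.mul_sum]
      exact Finset.sum_congr rfl fun i _ => by ring
  have hadd : ∀ w w', η (w + w') = η w + η w' := by
    intro w w'; ext k; simp [η, add_mul, Finset.sum_add_distrib]
  have hsmul : ∀ (c : ℂ) w, η (c • w) = c • η w := by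
    intro c w; ext k; simp [η, Finset.mul_sum, mul_assoc]
  have hall : ∀ w, η w = 0 := by
    refine gen_induction (G.map Complex.ofRealHom)ᵀ (hurw_transpose _ hG) (fun w => η w = 0)
      ?_ ?_ ?_
    · ext k; simp [η]
    · intro w w' h1 h2; rw [hadd, h1, h2, add_zero]
    · intro l k w hl
      induction k generalizing w with
      | zero => intro hw; have : w = 0 := by simpa using hw
                rw [this]; ext k; simp [η]
      | succ k ih =>
        intro hw
        rw [pow_succ, ← Matrix.mulVec_mulVec] at hw
        have h1 := ih _ hw
        have h2 := hη w
        have h3 : (G.map Complex.ofRealHom)ᵀ *ᵥ w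
            = l • w + ((G.map Complex.ofRealHom)ᵀ - l • (1 : Matrix (Fin p) (Fin p) ℂ)) *ᵥ w := by
          rw [Matrix.sub_mulVec, Matrix.smul_mulVec, Matrix.one_mulVec]; abel
        rw [h3, hadd, h1, add_zero, hsmul, Matrix.mulVec_smul] at h2
        exact key_obs n m S H hS hobs μ l hμ hl _ h2
  ext ⟨i, k⟩
  have := congrFun (hall (Pi.single i 1)) k
  simpa [η, Pi.single_apply] using this

theorem array_tendsto (n m p : ℕ) (S : Matrix (Fin n) (Fin n) ℝ) (H : Matrix (Fin m) (Fin n) ℝ)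
    (hS : S + Sᵀ = 0)
    (hobs : ∀ x : Fin n → ℝ,
      (∀ t : ℝ, 0 ≤ t → H *ᵥ (NormedSpace.exp (t • S) *ᵥ x) = 0) → x = 0)
    (Γ : Matrix (Fin p) (Fin p) ℝ) (hΓ : IsConnectedInterconnection Γ)
    (r : Fin p → ℝ) (hr : r ᵥ* Γ = 0) (hr1 : ∑ i, r i = 1)
    (ξ0 : Fin p × Fin n → ℝ) :
    Tendsto (fun t : ℝ =>
        NormedSpace.exp (t • ((1 : Matrix (Fin p) (Fin p) ℝ) ⊗ₖ S + Γ ⊗ₖ (Hᵀ * H))) *ᵥ ξ0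
          - (vecMulVec (fun _ => (1 : ℝ)) r ⊗ₖ NormedSpace.exp (t • S)) *ᵥ ξ0)
      atTop (nhds 0) := by
  set R := vecMulVec (fun _ : Fin p => (1 : ℝ)) r with hR
  set K := Hᵀ * H with hK
  set A := (1 : Matrix (Fin p) (Fin p) ℝ) ⊗ₖ S + Γ ⊗ₖ K with hA
  set B := (1 : Matrix (Fin p) (Fin p) ℝ) ⊗ₖ S + (Γ - R) ⊗ₖ K with hB
  set P := R ⊗ₖ (1 : Matrix (Fin n) (Fin n) ℝ) with hP
  have hRΓ : R * Γ = 0 := by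
    rw [hR, Matrix.vecMulVec_mul, hr, Matrix.vecMulVec_zero]
  have hΓR : Γ * R = 0 := by
    rw [hR, Matrix.mul_vecMulVec]
    have : Γ *ᵥ (fun _ => (1 : ℝ)) = 0 := by
      ext i; simpa [Matrix.mulVec, dotProduct] using hΓ.1.2 i
    rw [this, Matrix.zero_vecMulVec]
  have hRR : R * R = R := by
    ext i j
    simp [hR, Matrix.mul_apply, vecMulVec_apply, ← Finset.sum_mul, hr1]
  have hPA : P * A = ((1 : Matrix (Fin p) (Fin p) ℝ) ⊗ₖ S) * P := by
    rw [hP, hA, mul_add, ← Matrix.mul_kronecker_mul, ← Matrix.mul_kronecker_mul,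
      ← Matrix.mul_kronecker_mul, hRΓ]
    simp
  have hQ : (1 - P) * A = B * (1 - P) := by
    have hBP : B * P = ((1 : Matrix (Fin p) (Fin p) ℝ) ⊗ₖ S) * P - R ⊗ₖ K := by
      rw [hP, hB, add_mul, ← Matrix.mul_kronecker_mul, ← Matrix.mul_kronecker_mul,
        sub_mul, hΓR, hRR]
      ext ⟨i, k⟩ ⟨j, l⟩
      simp [sub_eq_add_neg]
    have hBA : B = A - R ⊗ₖ K := by
      rw [hB, hA]
      ext ⟨i, k⟩ ⟨j, l⟩
      simp only [Matrix.add_apply, Matrix.sub_apply, Matrix.kroneckerMap_apply]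
      ring
    rw [sub_mul, mul_sub, one_mul, mul_one, hPA, hBP, hBA]; abel
  have hmain : ∀ t : ℝ, NormedSpace.exp (t • A) *ᵥ ξ0 - (R ⊗ₖ NormedSpace.exp (t • S)) *ᵥ ξ0
      = NormedSpace.exp (t • B) *ᵥ ((1 - P) *ᵥ ξ0) := by
    intro t
    have h1 := semiconj_exp _ _ _ hQ t
    have h2 := semiconj_exp _ _ _ hPA t
    have h3 : t • ((1 : Matrix (Fin p) (Fin p) ℝ) ⊗ₖ S)
        = (1 : Matrix (Fin p) (Fin p) ℝ) ⊗ₖ (t • S) := by rw [Matrix.kronecker_smul]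
    rw [h3, exp_one_kron, hP, ← Matrix.mul_kronecker_mul, one_mul, mul_one, ← hP] at h2
    rw [Matrix.mulVec_mulVec, ← h1, ← Matrix.sub_mulVec, sub_mul, one_mul, h2]
  simp_rw [hmain]
  have hH := hurw_array n m p S H hS hobs _ (hurw_gamma Γ hΓ r hr hr1)
  rw [← hR, ← hK, ← hB] at hH
  have hT := hurw_tendsto _ hH (fun i => (((1 - P) *ᵥ ξ0) i : ℂ))
  rw [tendsto_pi_nhds] at hT ⊢
  intro i
  have h4 := (Complex.continuous_re.tendsto _).comp (hT i)
  simp only [Pi.zero_apply, Complex.zero_re] at h4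
  refine h4.congr fun t => ?_
  simp only [Function.comp]
  rw [← exp_map_ofReal, map_mulVec_re]
  simp

/-- Synchronization in an array of output-coupled skew-symmetric systems:
with `S` skew-symmetric, `(H, S)` observable and `Γ` a connected interconnection,
the solution `ξ(t) = exp(t(I_p ⊗ S + Γ ⊗ HᵀH)) ξ(0)` converges to
`(1rᵀ ⊗ exp(tS)) ξ(0)`, and each block synchronizes to `ξ̄(t) = (rᵀ ⊗ exp(tS)) ξ(0)`. -/
theorem skew_symmetric_array_synchronizes
    (n m p : ℕ) (S : Matrix (Fin n) (Fin n) ℝ) (H : Matrix (Fin m) (Fin n) ℝ)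
    (hS : S + Sᵀ = 0)
    (hobs : ∀ x : Fin n → ℝ,
      (∀ t : ℝ, 0 ≤ t → H *ᵥ (NormedSpace.exp (t • S) *ᵥ x) = 0) → x = 0)
    (Γ : Matrix (Fin p) (Fin p) ℝ) (hΓ : IsConnectedInterconnection Γ)
    (r : Fin p → ℝ) (hr : r ᵥ* Γ = 0) (hr1 : ∑ i, r i = 1)
    (ξ0 : Fin p × Fin n → ℝ) :
    Tendsto (fun t : ℝ =>
        NormedSpace.exp (t • ((1 : Matrix (Fin p) (Fin p) ℝ) ⊗ₖ S + Γ ⊗ₖ (Hᵀ * H))) *ᵥ ξ0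
          - (vecMulVec (fun _ => (1 : ℝ)) r ⊗ₖ NormedSpace.exp (t • S)) *ᵥ ξ0)
      atTop (nhds 0) ∧
    ∀ i : Fin p,
      Tendsto (fun t : ℝ => (fun k : Fin n =>
          (NormedSpace.exp (t • ((1 : Matrix (Fin p) (Fin p) ℝ) ⊗ₖ S + Γ ⊗ₖ (Hᵀ * H)))
              *ᵥ ξ0) (i, k)
            - ∑ j : Fin p, r j * (NormedSpace.exp (t • S) *ᵥ fun l => ξ0 (j, l)) k))
        atTop (nhds 0) := by
  have h := array_tendsto n m p S H hS hobs Γ hΓ r hr hr1 ξ0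
  refine ⟨h, fun i => ?_⟩
  rw [tendsto_pi_nhds] at h ⊢
  intro k
  refine (h (i, k)).congr fun t => ?_
  simp only [Pi.sub_apply]
  congr 1
  simp only [Matrix.mulVec, dotProduct, Fintype.sum_prod_type, Matrix.kroneckerMap_apply,
    vecMulVec_apply, one_mul, Finset.mul_sum, mul_assoc]
end

section
/- Let F ∈ ℝ^{n×n} be similar over ℝ to a skew-symmetric matrix (i.e., there exist an invertible T ∈ ℝ^{n×n} and a skew-symmetric S ∈ ℝ^{n×n} with F = T S T⁻¹; equivalently, F is neutrally stable with all eigenvalues on the imaginary axis). Then the limit P := lim_{t→∞} t⁻¹ ∫₀ᵗ exp(Fᵀτ) exp(Fτ) dτ exists, P is symmetric positive definite, and PF + FᵀP = 0. -/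
open Matrix Filter Topology

section Helpers

open scoped Matrix.Norms.L2Operator

/-- The Lyapunov operator `X ↦ Sᵀ X + X S`. -/
def lyapOp {n : ℕ} (S : Matrix (Fin n) (Fin n) ℝ) :
    Matrix (Fin n) (Fin n) ℝ →ₗ[ℝ] Matrix (Fin n) (Fin n) ℝ where
  toFun X := Sᵀ * X + X * S
  map_add' X Y := by simp only [mul_add, add_mul]; abel
  map_smul' c X := by simp

lemma lyapOp_apply {n : ℕ} (S X : Matrix (Fin n) (Fin n) ℝ) :
    lyapOp S X = Sᵀ * X + X * S := rfl

lemma lyapOp_ker {n : ℕ} (S : Matrix (Fin n) (Fin n) ℝ) (hS : Sᵀ = -S)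
    (X : Matrix (Fin n) (Fin n) ℝ) (h : lyapOp S (lyapOp S X) = 0) : lyapOp S X = 0 := by
  have h1 : ((lyapOp S X)ᵀ * lyapOp S X).trace = -(Xᵀ * lyapOp S (lyapOp S X)).trace := by
    generalize hY : lyapOp S X = Y
    have e : Yᵀ = Xᵀ * S - S * Xᵀ := by
      rw [← hY, lyapOp_apply]
      simp [transpose_mul, hS]
      abel
    rw [e, lyapOp_apply, hS, sub_mul, trace_sub, mul_add, trace_add]
    have : (S * Xᵀ * Y).trace = (Xᵀ * (Y * S)).trace := by
      rw [mul_assoc, trace_mul_comm, mul_assoc]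
    rw [this]
    simp [mul_assoc]
    ring
  rw [h, mul_zero, trace_zero, neg_zero] at h1
  rw [← conjTranspose_eq_transpose_of_trivial] at h1
  exact trace_conjTranspose_mul_self_eq_zero_iff.mp h1

lemma lyapOp_decomp {n : ℕ} (S : Matrix (Fin n) (Fin n) ℝ) (hS : Sᵀ = -S)
    (G : Matrix (Fin n) (Fin n) ℝ) :
    ∃ K X : Matrix (Fin n) (Fin n) ℝ, lyapOp S K = 0 ∧ K + lyapOp S X = G := by
  have hd : Disjoint (LinearMap.ker (lyapOp S)) (LinearMap.range (lyapOp S)) := by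
    rw [Submodule.disjoint_def]
    rintro _ h ⟨X, rfl⟩
    exact lyapOp_ker S hS X h
  have ht := Submodule.eq_top_of_disjoint _ _
    (by rw [add_comm, LinearMap.finrank_range_add_finrank_ker]) hd
  have : G ∈ LinearMap.ker (lyapOp S) ⊔ LinearMap.range (lyapOp S) := by rw [ht]; trivial
  obtain ⟨K, hK, _, ⟨X, rfl⟩, h⟩ := Submodule.mem_sup.mp this
  exact ⟨K, X, hK, h⟩

/-- Conjugated flow. -/
noncomputable def flow {n : ℕ} (S : Matrix (Fin n) (Fin n) ℝ) (X : Matrix (Fin n) (Fin n) ℝ)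
    (t : ℝ) : Matrix (Fin n) (Fin n) ℝ :=
  NormedSpace.exp (t • Sᵀ) * X * NormedSpace.exp (t • S)

lemma flow_hasDerivAt {n : ℕ} (S X : Matrix (Fin n) (Fin n) ℝ) (t : ℝ) :
    HasDerivAt (flow S X) (flow S (lyapOp S X) t) t := by
  have h := ((hasDerivAt_exp_smul_const (𝕂 := ℝ) Sᵀ t).mul_const X).mul
    (hasDerivAt_exp_smul_const' (𝕂 := ℝ) S t)
  refine HasDerivAt.congr_deriv (f := flow S X) h ?_
  simp only [flow, lyapOp_apply]
  noncomm_ring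

lemma flow_continuous {n : ℕ} (S X : Matrix (Fin n) (Fin n) ℝ) : Continuous (flow S X) :=
  continuous_iff_continuousAt.mpr fun t => (flow_hasDerivAt S X t).continuousAt

lemma exp_orth {n : ℕ} (S : Matrix (Fin n) (Fin n) ℝ) (hS : Sᵀ = -S) (t : ℝ) :
    NormedSpace.exp (t • Sᵀ) * NormedSpace.exp (t • S) = 1 := by
  rw [hS, ← Matrix.exp_add_of_commute]
  · simp
  · simp [Commute, SemiconjBy]

lemma flow_bounded {n : ℕ} (S X : Matrix (Fin n) (Fin n) ℝ) (hS : Sᵀ = -S) :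
    ∃ C, ∀ t, ‖flow S X t‖ ≤ C := by
  obtain ⟨c, hc0, hc⟩ : ∃ c : ℝ, 0 ≤ c ∧ ∀ t : ℝ, ‖NormedSpace.exp (t • S)‖ ≤ c := by
    refine ⟨‖(1 : Matrix (Fin n) (Fin n) ℝ)‖ + 1, by positivity, fun t => ?_⟩
    have h := l2_opNorm_conjTranspose_mul_self (NormedSpace.exp (t • S))
    rw [conjTranspose_eq_transpose_of_trivial, ← Matrix.exp_transpose, transpose_smul,
      exp_orth S hS t] at h
    nlinarith [norm_nonneg (NormedSpace.exp (t • S)),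
      norm_nonneg (1 : Matrix (Fin n) (Fin n) ℝ)]
  refine ⟨c * ‖X‖ * c, fun t => ?_⟩
  have h2 : ‖NormedSpace.exp (t • Sᵀ)‖ ≤ c := by
    have := hc (-t)
    rwa [neg_smul, ← smul_neg, ← hS] at this
  refine (norm_mul_le _ _).trans ?_
  have := norm_mul_le (NormedSpace.exp (t • Sᵀ)) X
  have h3 := hc t
  gcongr
  refine this.trans ?_
  gcongr

lemma flow_const {n : ℕ} (S K : Matrix (Fin n) (Fin n) ℝ) (hK : lyapOp S K = 0) (t : ℝ) :
    flow S K t = K := by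
  have h : ∀ s, HasDerivAt (flow S K) 0 s := fun s => by
    have := flow_hasDerivAt S K s
    rw [hK] at this
    simpa [flow] using this
  have := is_const_of_deriv_eq_zero (fun s => (h s).differentiableAt) (fun s => (h s).deriv) t 0
  rw [this]
  simp [flow]

lemma flow_average {n : ℕ} (S K X : Matrix (Fin n) (Fin n) ℝ) (hS : Sᵀ = -S)
    (hK : lyapOp S K = 0) (l : Matrix (Fin n) (Fin n) ℝ →ₗ[ℝ] ℝ) :
    Tendsto (fun t : ℝ => t⁻¹ * ∫ τ in (0 : ℝ)..t, l (flow S (K + lyapOp S X) τ))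
      atTop (𝓝 (l K)) := by
  let L : Matrix (Fin n) (Fin n) ℝ →L[ℝ] ℝ := LinearMap.toContinuousLinearMap l
  have hL : ∀ Y, L Y = l Y := fun Y => rfl
  have hsplit : ∀ τ, flow S (K + lyapOp S X) τ = K + flow S (lyapOp S X) τ := fun τ => by
    rw [← flow_const S K hK τ]
    simp only [flow_const S K hK τ]
    conv_rhs => rw [← flow_const S K hK τ]
    simp [flow, mul_add, add_mul]
  have hint : ∀ t : ℝ, ∫ τ in (0 : ℝ)..t, l (flow S (K + lyapOp S X) τ)
      = t * l K + (L (flow S X t) - L (flow S X 0)) := fun t => by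
    have hd : ∀ s, HasDerivAt (fun τ => τ * l K + L (flow S X τ))
        (l (flow S (K + lyapOp S X) s)) s := fun s => by
      have h1 := L.hasFDerivAt.comp_hasDerivAt s (flow_hasDerivAt S X s)
      have h2 := ((hasDerivAt_id s).mul_const (l K)).add h1
      rw [hsplit, map_add]
      rw [one_mul] at h2
      exact h2
    rw [intervalIntegral.integral_eq_sub_of_hasDerivAt (fun s _ => hd s)
      ((L.continuous.comp (flow_continuous S _)).intervalIntegrable _ _)]
    ring
  obtain ⟨C, hC⟩ := flow_bounded S X hS
  have hz : Tendsto (fun t : ℝ => t⁻¹ * (L (flow S X t) - L (flow S X 0))) atTop (𝓝 0) := by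
    refine tendsto_inv_atTop_zero.zero_mul_isBoundedUnder_le ?_
    refine isBoundedUnder_of ⟨‖L‖ * (C + C), fun t => ?_⟩
    simp only [Function.comp, ← map_sub]
    refine (L.le_opNorm _).trans ?_
    gcongr
    exact (norm_sub_le _ _).trans (add_le_add (hC t) (hC 0))
  have h := (tendsto_const_nhds (x := l K)).add hz
  rw [add_zero] at h
  refine h.congr' ?_
  filter_upwards [eventually_gt_atTop 0] with t ht
  rw [hint]
  field_simp

lemma dot_mulVec_le {n : ℕ} (A : Matrix (Fin n) (Fin n) ℝ) (x : Fin n → ℝ) :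
    (A *ᵥ x) ⬝ᵥ (A *ᵥ x) ≤ ‖A‖ ^ 2 * (x ⬝ᵥ x) := by
  have h := l2_opNorm_mulVec A (WithLp.toLp 2 x)
  have e : ∀ y : Fin n → ℝ, y ⬝ᵥ y = ‖WithLp.toLp 2 y‖ ^ 2 := fun y => by
    rw [EuclideanSpace.real_norm_sq_eq]
    simp [dotProduct, sq]
  rw [e, e, ← mul_pow]
  gcongr
  exact h

end Helpers

open scoped Matrix.Norms.L2Operator in
lemma average_gram_aux
    (n : ℕ) (F T S : Matrix (Fin n) (Fin n) ℝ)
    (hT : IsUnit T) (hS : S + Sᵀ = 0) (hF : F = T * S * T⁻¹) :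
    ∃ P : Matrix (Fin n) (Fin n) ℝ, Pᵀ = P ∧ P.PosDef ∧
      (∀ i j, Tendsto (fun t : ℝ => t⁻¹ * ∫ τ in (0 : ℝ)..t,
          (NormedSpace.exp (τ • Fᵀ) * NormedSpace.exp (τ • F)) i j)
        atTop (nhds (P i j))) ∧
      P * F + Fᵀ * P = 0 := by
  have hS' : Sᵀ = -S := (neg_eq_of_add_eq_zero_right hS).symm
  obtain ⟨K, X, hK, hG⟩ := lyapOp_decomp S hS' (Tᵀ * T)
  have hTdet : IsUnit T.det := (Matrix.isUnit_iff_isUnit_det T).mp hT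
  have hTT : T⁻¹ * T = 1 := Matrix.nonsing_inv_mul T hTdet
  have hTT' : T * T⁻¹ = 1 := Matrix.mul_nonsing_inv T hTdet
  have hexp : ∀ τ : ℝ, NormedSpace.exp (τ • F) = T * NormedSpace.exp (τ • S) * T⁻¹ := fun τ => by
    rw [← Matrix.exp_conj _ _ hT, hF]
    simp
  have hexpT : ∀ τ : ℝ, NormedSpace.exp (τ • Fᵀ) = (NormedSpace.exp (τ • F))ᵀ := fun τ => by
    rw [← Matrix.exp_transpose, transpose_smul]
  have hexpS : ∀ τ : ℝ, NormedSpace.exp (τ • Sᵀ) = (NormedSpace.exp (τ • S))ᵀ := fun τ => by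
    rw [← Matrix.exp_transpose, transpose_smul]
  have hM : ∀ τ : ℝ, NormedSpace.exp (τ • Fᵀ) * NormedSpace.exp (τ • F)
      = (T⁻¹)ᵀ * flow S (K + lyapOp S X) τ * T⁻¹ := fun τ => by
    rw [hexpT, hexp, hG, flow, hexpS]
    simp only [transpose_mul, mul_assoc]
  have hav : ∀ l : Matrix (Fin n) (Fin n) ℝ →ₗ[ℝ] ℝ,
      Tendsto (fun t : ℝ => t⁻¹ * ∫ τ in (0 : ℝ)..t,
          l (NormedSpace.exp (τ • Fᵀ) * NormedSpace.exp (τ • F)))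
        atTop (𝓝 (l ((T⁻¹)ᵀ * K * T⁻¹))) := fun l => by
    have := flow_average S K X hS' hK
      (l ∘ₗ LinearMap.mulRight ℝ T⁻¹ ∘ₗ LinearMap.mulLeft ℝ (T⁻¹)ᵀ)
    simp only [hM]
    simpa using this
  have hentry : ∀ i j, Tendsto (fun t : ℝ => t⁻¹ * ∫ τ in (0 : ℝ)..t,
          (NormedSpace.exp (τ • Fᵀ) * NormedSpace.exp (τ • F)) i j)
        atTop (𝓝 (((T⁻¹)ᵀ * K * T⁻¹) i j)) := fun i j =>
    hav (Matrix.entryLinearMap ℝ ℝ i j)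
  have hsymm : ((T⁻¹)ᵀ * K * T⁻¹)ᵀ = (T⁻¹)ᵀ * K * T⁻¹ := by
    ext i j
    refine tendsto_nhds_unique (hentry j i) ((hentry i j).congr fun t => ?_)
    congr 2
    ext τ
    rw [hexpT, ← transpose_apply (_ * _) j i, transpose_mul, transpose_transpose]
  refine ⟨(T⁻¹)ᵀ * K * T⁻¹, hsymm, ?_, hentry, ?_⟩
  · refine Matrix.PosDef.of_dotProduct_mulVec_pos
      (by rw [IsHermitian, conjTranspose_eq_transpose_of_trivial, hsymm]) fun x hx => ?_
    rw [star_trivial]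
    let q : Matrix (Fin n) (Fin n) ℝ →ₗ[ℝ] ℝ :=
      { toFun := fun A => x ⬝ᵥ (A *ᵥ x)
        map_add' := fun A B => by simp [add_mulVec]
        map_smul' := fun c A => by simp [smul_mulVec] }
    have hxx : 0 < x ⬝ᵥ x := by
      have := dotProduct_star_self_pos_iff.mpr hx
      rwa [star_trivial] at this
    set c : ℝ := ‖T‖ ^ 2 * ‖T⁻¹‖ ^ 2 with hc
    have hlow : ∀ τ : ℝ, x ⬝ᵥ x ≤
        c * q (NormedSpace.exp (τ • Fᵀ) * NormedSpace.exp (τ • F)) := fun τ => by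
      have e1 : q (NormedSpace.exp (τ • Fᵀ) * NormedSpace.exp (τ • F)) =
          (NormedSpace.exp (τ • F) *ᵥ x) ⬝ᵥ (NormedSpace.exp (τ • F) *ᵥ x) := by
        change x ⬝ᵥ (_ *ᵥ x) = _
        rw [hexpT, ← mulVec_mulVec, dotProduct_mulVec, vecMul_transpose]
      have e2 : (T⁻¹ *ᵥ x) ⬝ᵥ (T⁻¹ *ᵥ x) = (NormedSpace.exp (τ • S) *ᵥ (T⁻¹ *ᵥ x)) ⬝ᵥ
          (NormedSpace.exp (τ • S) *ᵥ (T⁻¹ *ᵥ x)) := by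
        generalize T⁻¹ *ᵥ x = y
        rw [dotProduct_mulVec, ← mulVec_transpose, mulVec_mulVec, ← hexpS, exp_orth S hS',
          one_mulVec]
      have e3 : NormedSpace.exp (τ • S) *ᵥ (T⁻¹ *ᵥ x)
          = T⁻¹ *ᵥ (NormedSpace.exp (τ • F) *ᵥ x) := by
        rw [mulVec_mulVec, mulVec_mulVec, hexp, ← mul_assoc, ← mul_assoc, hTT, one_mul]
      have h1 := dot_mulVec_le T (T⁻¹ *ᵥ x)
      rw [mulVec_mulVec, hTT', one_mulVec, e2, e3] at h1
      have h2 := dot_mulVec_le T⁻¹ (NormedSpace.exp (τ • F) *ᵥ x)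
      rw [e1, hc, mul_assoc]
      refine h1.trans ?_
      gcongr
    have hlim := (hav q).const_mul c
    have hcont : Continuous fun τ : ℝ =>
        q (NormedSpace.exp (τ • Fᵀ) * NormedSpace.exp (τ • F)) := by
      simp only [hM]
      exact (LinearMap.continuous_of_finiteDimensional q).comp
        ((continuous_const.mul (flow_continuous S _)).mul continuous_const)
    have hge : x ⬝ᵥ x ≤ c * q ((T⁻¹)ᵀ * K * T⁻¹) := by
      refine ge_of_tendsto hlim ?_
      filter_upwards [eventually_gt_atTop 0] with t ht
      have : ∫ τ in (0 : ℝ)..t, x ⬝ᵥ x ≤ ∫ τ in (0 : ℝ)..t,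
          c * q (NormedSpace.exp (τ • Fᵀ) * NormedSpace.exp (τ • F)) :=
        intervalIntegral.integral_mono ht.le (by simp)
          ((continuous_const.mul hcont).intervalIntegrable _ _) hlow
      rw [intervalIntegral.integral_const, intervalIntegral.integral_const_mul, sub_zero,
        smul_eq_mul] at this
      rw [mul_left_comm, ← div_eq_inv_mul, le_div_iff₀ ht]
      linarith
    have hc0 : 0 ≤ c := by positivity
    have : 0 < c * q ((T⁻¹)ᵀ * K * T⁻¹) := hxx.trans_le hge
    exact pos_of_mul_pos_right this hc0
  · have hFT : Fᵀ = (T⁻¹)ᵀ * Sᵀ * Tᵀ := by rw [hF]; simp [transpose_mul, mul_assoc]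
    have h1 : (T⁻¹)ᵀ * K * T⁻¹ * F = (T⁻¹)ᵀ * (K * S) * T⁻¹ := by
      rw [hF]
      calc _ = (T⁻¹)ᵀ * K * (T⁻¹ * T) * S * T⁻¹ := by simp only [mul_assoc]
        _ = _ := by rw [hTT]; simp only [mul_assoc, one_mul]
    have h2 : Fᵀ * ((T⁻¹)ᵀ * K * T⁻¹) = (T⁻¹)ᵀ * (Sᵀ * K) * T⁻¹ := by
      have : Tᵀ * (T⁻¹)ᵀ = 1 := by rw [← transpose_mul, hTT, transpose_one]
      rw [hFT]
      calc _ = (T⁻¹)ᵀ * Sᵀ * (Tᵀ * (T⁻¹)ᵀ) * K * T⁻¹ := by simp only [mul_assoc]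
        _ = _ := by rw [this]; simp only [mul_assoc, one_mul]
    rw [h1, h2, ← add_mul, ← mul_add, add_comm, ← lyapOp_apply, hK]
    simp



/-- If `F` is similar over `ℝ` to a skew-symmetric matrix, then
`P = lim_{t→∞} t⁻¹ ∫₀ᵗ exp(Fᵀτ) exp(Fτ) dτ` exists (entrywise), is symmetric
positive definite, and satisfies `PF + FᵀP = 0`. -/
theorem average_gram_limit_exists_posDef
    (n : ℕ) (F T S : Matrix (Fin n) (Fin n) ℝ)
    (hT : IsUnit T) (hS : S + Sᵀ = 0) (hF : F = T * S * T⁻¹) :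
    ∃ P : Matrix (Fin n) (Fin n) ℝ, Pᵀ = P ∧ P.PosDef ∧
      (∀ i j, Tendsto (fun t : ℝ => t⁻¹ * ∫ τ in (0 : ℝ)..t,
          (NormedSpace.exp (τ • Fᵀ) * NormedSpace.exp (τ • F)) i j)
        atTop (nhds (P i j))) ∧
      P * F + Fᵀ * P = 0 := by
  exact average_gram_aux n F T S hT hS hF
end

section
/- Let A ∈ ℝ^{n×n} have no eigenvalue with positive real part (every eigenvalue λ of A over ℂ satisfies Re(λ) ≤ 0) and let C ∈ ℝ^{m×n} have full column rank n. Set L := (CᵀC)⁻¹Cᵀ, so that LC = I_n. Then for every p, every connected interconnection Γ ∈ ℝ^{p×p}, every r ∈ ℝ^p with rᵀΓ = 0 and rᵀ1 = 1, and every initial vector x(0) ∈ ℝ^{pn}, the solution x(t) = exp(t(I_p ⊗ A + Γ ⊗ LC)) x(0) satisfies |x(t) − (1rᵀ ⊗ exp(tA)) x(0)| → 0 as t → ∞; in particular the blocks x_i(t) synchronize to x̄(t) = (rᵀ ⊗ exp(tA)) x(0). -/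
open Matrix Filter Topology
open scoped Kronecker

section
open scoped Matrix.Norms.Operator
theorem hasSum_mexp {ι 𝕂 : Type*} [Fintype ι] [DecidableEq ι] [RCLike 𝕂] (M : Matrix ι ι 𝕂) :
    HasSum (fun k : ℕ => ((k.factorial : 𝕂)⁻¹) • M ^ k) (NormedSpace.exp M) :=
  NormedSpace.exp_series_hasSum_exp' (𝕂 := 𝕂) M
end

theorem mexp_mul_congr {ι 𝕂 : Type*} [Fintype ι] [DecidableEq ι] [RCLike 𝕂]
    (M N P : Matrix ι ι 𝕂) (h : ∀ k : ℕ, M ^ k * P = N ^ k * P) :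
    NormedSpace.exp M * P = NormedSpace.exp N * P := by
  have h1 := (hasSum_mexp M).mul_right P
  have h2 := (hasSum_mexp N).mul_right P
  refine h1.unique ?_
  convert h2 using 2 with k
  simp [h k]

theorem mexp_map {ι κ 𝕂 𝕃 : Type*} [Fintype ι] [DecidableEq ι] [Fintype κ] [DecidableEq κ]
    [RCLike 𝕂] [RCLike 𝕃]
    (f : Matrix ι ι 𝕂 →+* Matrix κ κ 𝕃) (hf : Continuous f) (M : Matrix ι ι 𝕂) :
    f (NormedSpace.exp M) = NormedSpace.exp (f M) := by
  have h1 := (hasSum_mexp M).map f hf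
  refine h1.unique ?_
  convert hasSum_mexp (f M) using 2 with k
  simp [map_inv_natCast_smul f 𝕂 𝕃]

theorem mexp_mulVec_nilp {ι : Type*} [Fintype ι] [DecidableEq ι] (N : Matrix ι ι ℂ)
    (v : ι → ℂ) (k : ℕ) (hk : N ^ k *ᵥ v = 0) (t : ℂ) :
    NormedSpace.exp (t • N) *ᵥ v
      = ∑ j ∈ Finset.range k, (((j.factorial : ℂ)⁻¹) * t ^ j) • (N ^ j *ᵥ v) := by
  have h1 := (hasSum_mexp (t • N)).map
    (⟨⟨fun M : Matrix ι ι ℂ => M *ᵥ v, by simp⟩, fun a b => by simp [add_mulVec]⟩ :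
      Matrix ι ι ℂ →+ (ι → ℂ)) (by
        change Continuous (fun M : Matrix ι ι ℂ => M *ᵥ v)
        fun_prop)
  have h2 : HasSum (fun j : ℕ => (((j.factorial : ℂ)⁻¹) * t ^ j) • (N ^ j *ᵥ v))
      (NormedSpace.exp (t • N) *ᵥ v) := by
    convert h1 using 2 with j
    · simp [smul_pow, smul_mulVec, smul_smul]
    · rfl
  refine h2.unique (hasSum_sum_of_ne_finset_zero ?_)
  intro j hj
  have hj' : k ≤ j := by simpa using hj
  obtain ⟨l, rfl⟩ := Nat.exists_eq_add_of_le hj'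
  rw [add_comm k l, pow_add N, ← mulVec_mulVec, hk]
  simp

theorem mexp_shift {ι : Type*} [Fintype ι] [DecidableEq ι] (M : Matrix ι ι ℂ) (μ t : ℂ) :
    NormedSpace.exp (t • M) = Complex.exp (t * μ) • NormedSpace.exp (t • (M - μ • 1)) := by
  have : t • M = (t * μ) • (1 : Matrix ι ι ℂ) + t • (M - μ • 1) := by
    rw [smul_sub, smul_smul]; abel
  rw [this, Matrix.exp_add_of_commute _ _ ((Commute.one_left _).smul_left _)]
  have h : NormedSpace.exp ((t * μ) • (1 : Matrix ι ι ℂ)) = Complex.exp (t * μ) • 1 := by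
    rw [smul_one_eq_diagonal, Matrix.exp_diagonal, smul_one_eq_diagonal]
    congr 1
    ext i
    rw [Pi.coe_exp, Complex.exp_eq_exp_ℂ]
  rw [h, smul_mul_assoc, one_mul]

theorem scalar_decay (j : ℕ) (μ : ℂ) (a : ℝ) (h : μ.re < a) :
    Tendsto (fun t : ℝ => (Real.exp (-a * t) : ℂ) * (Complex.exp ((t : ℂ) * μ) * (t : ℂ) ^ j))
      atTop (𝓝 0) := by
  rw [tendsto_zero_iff_norm_tendsto_zero]
  have hc : 0 < a - μ.re := by linarith
  have h1 := (Real.tendsto_pow_mul_exp_neg_atTop_nhds_zero j).comp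
    (tendsto_id.const_mul_atTop hc)
  have h2 := h1.const_mul (((a - μ.re) ^ j)⁻¹)
  rw [mul_zero] at h2
  refine h2.congr' ?_
  filter_upwards [eventually_ge_atTop (0 : ℝ)] with t ht
  simp only [Function.comp, id, norm_mul, norm_pow, Complex.norm_real, Complex.norm_exp,
    Real.norm_eq_abs, abs_of_nonneg ht, abs_of_pos (Real.exp_pos _), Complex.mul_re,
    Complex.ofReal_re, Complex.ofReal_im, zero_mul, sub_zero]
  rw [← mul_assoc (Real.exp (-a * t)), ← Real.exp_add, mul_pow]
  have : -((a - μ.re) * t) = -a * t + t * μ.re := by ring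
  rw [this]
  have : (a - μ.re) ^ j ≠ 0 := by positivity
  field_simp

theorem mexp_decay_vec {ι : Type*} [Fintype ι] [DecidableEq ι] (M : Matrix ι ι ℂ) (a : ℝ)
    (h : ∀ μ ∈ spectrum ℂ M, μ.re < a) (v : ι → ℂ) :
    Tendsto (fun t : ℝ => (Real.exp (-a * t) : ℂ) • (NormedSpace.exp ((t : ℂ) • M) *ᵥ v))
      atTop (𝓝 0) := by
  let S : Submodule ℂ (ι → ℂ) :=
    { carrier := {v | Tendsto (fun t : ℝ => (Real.exp (-a * t) : ℂ) •
        (NormedSpace.exp ((t : ℂ) • M) *ᵥ v)) atTop (𝓝 0)}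
      zero_mem' := by simp
      add_mem' := by
        intro x y hx hy
        simpa [mulVec_add, smul_add] using Tendsto.add hx hy
      smul_mem' := by
        intro c x hx
        have := Tendsto.const_smul hx c
        simp only [smul_zero] at this
        refine this.congr fun t => ?_
        rw [mulVec_smul, smul_comm] }
  have hS : S = ⊤ := by
    rw [eq_top_iff, ← Module.End.iSup_maxGenEigenspace_eq_top (Matrix.toLin' M)]
    refine iSup_le fun μ v hv => ?_
    by_cases hv0 : v = 0
    · rw [hv0]; exact S.zero_mem
    obtain ⟨k, hk⟩ := (Module.End.mem_maxGenEigenspace _ _ _).1 hv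
    have hμ : μ ∈ spectrum ℂ M := by
      rw [← Matrix.spectrum_toLin', ← Module.End.hasEigenvalue_iff_mem_spectrum]
      refine Module.End.hasEigenvalue_of_hasGenEigenvalue (k := k) ?_
      intro hbot
      apply hv0
      have : v ∈ Module.End.genEigenspace (Matrix.toLin' M) μ k := by
        rw [Module.End.mem_genEigenspace_nat]
        exact hk
      rw [hbot] at this
      simpa using this
    have hk' : (M - μ • 1) ^ k *ᵥ v = 0 := by
      rw [← Matrix.toLin'_apply, Matrix.toLin'_pow]
      have h7 : Matrix.toLin' (M - μ • 1) = Matrix.toLin' M - μ • 1 := by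
        rw [map_sub, map_smul, Matrix.toLin'_one]; rfl
      rw [h7]
      exact hk
    have key : Tendsto (fun t : ℝ => ∑ j ∈ Finset.range k,
        ((Real.exp (-a * t) : ℂ) * (Complex.exp ((t : ℂ) * μ) * (t : ℂ) ^ j)) •
          (((j.factorial : ℂ)⁻¹) • ((M - μ • 1) ^ j *ᵥ v))) atTop (𝓝 0) := by
      rw [← Finset.sum_const_zero (s := Finset.range k)]
      refine tendsto_finsetSum _ fun j _ => ?_
      simpa using (scalar_decay j μ a (h μ hμ)).smul_const
        (((j.factorial : ℂ)⁻¹) • ((M - μ • 1) ^ j *ᵥ v))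
    refine key.congr fun t => ?_
    rw [mexp_shift M μ, smul_mulVec, mexp_mulVec_nilp _ v k hk', Finset.smul_sum,
      Finset.smul_sum]
    refine Finset.sum_congr rfl fun j _ => ?_
    simp only [smul_smul]
    congr 1
    ring
  have : v ∈ S := by rw [hS]; trivial
  exact this

theorem mexp_decay_real {ι : Type*} [Fintype ι] [DecidableEq ι] (M : Matrix ι ι ℝ) (a : ℝ)
    (h : ∀ μ ∈ spectrum ℂ (M.map Complex.ofReal), μ.re < a) :
    Tendsto (fun t : ℝ => Real.exp (-a * t) • NormedSpace.exp (t • M)) atTop (𝓝 0) := by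
  refine tendsto_pi_nhds.2 fun i => tendsto_pi_nhds.2 fun j => ?_
  have h1 := (tendsto_pi_nhds.1 (mexp_decay_vec _ a h (Pi.single j 1))) i
  have h2 := (Complex.continuous_re.tendsto _).comp h1
  simp only [Pi.zero_apply, Complex.zero_re] at h2
  refine h2.congr fun t => ?_
  have h3 : NormedSpace.exp ((t : ℂ) • M.map Complex.ofReal)
      = (NormedSpace.exp (t • M)).map Complex.ofReal := by
    have := mexp_map (Complex.ofRealHom.mapMatrix (m := ι))
      (by
        change Continuous (fun M : Matrix ι ι ℝ => M.map Complex.ofReal)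
        exact continuous_id.matrix_map Complex.continuous_ofReal) (t • M)
    simp only [RingHom.mapMatrix_apply] at this
    change (NormedSpace.exp (t • M)).map Complex.ofReal = _ at this
    rw [this]
    congr 1
    ext i j
    simp
  simp only [Function.comp, h3]
  simp [← Complex.ofReal_exp]

/-! kernel of a connected interconnection -/

theorem interconn_max {p : ℕ} (Γ : Matrix (Fin p) (Fin p) ℝ) (hΓ : IsInterconnection Γ)
    (k : Fin p) (hk : ∀ i : Fin p, Relation.ReflTransGen (fun a b => 0 < Γ a b) i k)
    (v : Fin p → ℝ) (hv : Γ *ᵥ v = 0) (i : Fin p) : v i ≤ v k := by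
  have : Nonempty (Fin p) := ⟨k⟩
  obtain ⟨m, hm⟩ := Finite.exists_max v
  suffices v m = v k by rw [← this]; exact hm i
  have step : ∀ a b : Fin p, v a = v m → 0 < Γ a b → v b = v m := by
    intro a b ha hab
    have h1 : ∑ j, Γ a j * (v m - v j) = 0 := by
      have h2 := congrFun hv a
      simp only [mulVec, dotProduct, Pi.zero_apply] at h2
      simp only [mul_sub, Finset.sum_sub_distrib, ← Finset.sum_mul, hΓ.2 a, h2]
      simp
    have h3 : ∀ j ∈ Finset.univ, 0 ≤ Γ a j * (v m - v j) := by
      intro j _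
      by_cases hj : a = j
      · subst hj; simp [ha]
      · exact mul_nonneg (hΓ.1 a j hj) (sub_nonneg.2 (hm j))
    have h4 := (Finset.sum_eq_zero_iff_of_nonneg h3).1 h1 b (Finset.mem_univ _)
    rcases mul_eq_zero.1 h4 with h | h <;> linarith
  have : ∀ b, Relation.ReflTransGen (fun a b => 0 < Γ a b) m b → v b = v m := by
    intro b hb
    induction hb with
    | refl => rfl
    | tail _ hbc ih => exact step _ _ ih hbc
  exact (this k (hk m)).symm

theorem interconn_const {p : ℕ} (Γ : Matrix (Fin p) (Fin p) ℝ) (hΓ : IsInterconnection Γ)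
    (k : Fin p) (hk : ∀ i : Fin p, Relation.ReflTransGen (fun a b => 0 < Γ a b) i k)
    (v : Fin p → ℝ) (hv : Γ *ᵥ v = 0) (i : Fin p) : v i = v k := by
  refine le_antisymm (interconn_max Γ hΓ k hk v hv i) ?_
  have := interconn_max Γ hΓ k hk (-v) (by rw [mulVec_neg, hv, neg_zero]) i
  simpa using this

theorem interconn_gersh {p : ℕ} (Γ : Matrix (Fin p) (Fin p) ℝ) (hΓ : IsInterconnection Γ)
    (μ : ℂ) (v : Fin p → ℂ) (hv : v ≠ 0) (h : Γ.map Complex.ofReal *ᵥ v = μ • v) :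
    μ.re < 0 ∨ μ = 0 := by
  have he : Module.End.HasEigenvalue (Matrix.toLin' (Γ.map Complex.ofReal)) μ :=
    Module.End.hasEigenvalue_of_hasEigenvector
      (Module.End.hasEigenvector_iff.2 ⟨Module.End.mem_eigenspace_iff.2 (by simpa using h), hv⟩)
  obtain ⟨i, hi⟩ := eigenvalue_mem_ball he
  have hs : ∑ j ∈ Finset.univ.erase i, ‖Γ.map Complex.ofReal i j‖ = - Γ i i := by
    have h1 : ∑ j ∈ Finset.univ.erase i, ‖Γ.map Complex.ofReal i j‖
        = ∑ j ∈ Finset.univ.erase i, Γ i j := by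
      refine Finset.sum_congr rfl fun j hj => ?_
      have : 0 ≤ Γ i j := hΓ.1 i j (Finset.ne_of_mem_erase hj).symm
      simp [abs_of_nonneg this]
    have h2 := Finset.add_sum_erase Finset.univ (fun j => Γ i j) (Finset.mem_univ i)
    simp only [hΓ.2 i] at h2
    rw [h1]; linarith
  rw [hs, mem_closedBall_iff_norm, Matrix.map_apply] at hi
  have h0 : 0 ≤ -Γ i i := (norm_nonneg _).trans hi
  have hsq : ‖μ - (Γ i i : ℂ)‖ ^ 2 ≤ (-Γ i i) ^ 2 := by gcongr
  rw [← Complex.normSq_eq_norm_sq, Complex.normSq_apply] at hsq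
  simp only [Complex.sub_re, Complex.sub_im, Complex.ofReal_re, Complex.ofReal_im, sub_zero] at hsq
  by_cases hre : μ.re < 0
  · exact Or.inl hre
  right
  push Not at hre
  have h5 : 0 ≤ μ.re * (-Γ i i) := mul_nonneg hre h0
  have h6 : μ.re * μ.re + μ.im * μ.im ≤ 0 := by nlinarith
  apply Complex.ext
  · simpa using (by nlinarith [mul_self_nonneg μ.re, mul_self_nonneg μ.im] : μ.re * μ.re = 0)
  · simpa using (by nlinarith [mul_self_nonneg μ.re, mul_self_nonneg μ.im] : μ.im * μ.im = 0)

theorem deflated_spectrum {p : ℕ} (Γ : Matrix (Fin p) (Fin p) ℝ)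
    (hΓ : IsConnectedInterconnection Γ)
    (r : Fin p → ℝ) (hr : r ᵥ* Γ = 0) (hr1 : ∑ i, r i = 1) :
    ∀ μ ∈ spectrum ℂ ((Γ - vecMulVec (fun _ => (1 : ℝ)) r).map Complex.ofReal), μ.re < 0 := by
  intro μ hμ
  obtain ⟨hI, k, hk⟩ := hΓ
  rw [← Matrix.spectrum_toLin', ← Module.End.hasEigenvalue_iff_mem_spectrum] at hμ
  obtain ⟨v, hv⟩ := hμ.exists_hasEigenvector
  have hv0 := hv.2
  have hBv : ∀ i, ∑ j, (Γ i j : ℂ) * v j - ∑ j, (r j : ℂ) * v j = μ * v i := by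
    intro i
    have := congrFun hv.apply_eq_smul i
    simpa [mulVec, dotProduct, vecMulVec_apply, sub_mul, Finset.sum_sub_distrib] using this
  set s : ℂ := ∑ j, (r j : ℂ) * v j with hs
  have hrΓ : ∀ j, ∑ i, (r i : ℂ) * (Γ i j : ℂ) = 0 := by
    intro j
    have := congrFun hr j
    simp only [vecMul, dotProduct, Pi.zero_apply] at this
    exact_mod_cast this
  have hr1' : ∑ i, (r i : ℂ) = 1 := by exact_mod_cast hr1
  have h1 : -s = μ * s := by
    have h2 : ∑ i, (r i : ℂ) * (∑ j, (Γ i j : ℂ) * v j - s) = ∑ i, (r i : ℂ) * (μ * v i) :=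
      Finset.sum_congr rfl fun i _ => by rw [hBv i]
    have h3 : ∑ i, (r i : ℂ) * ∑ j, (Γ i j : ℂ) * v j = 0 := by
      simp only [Finset.mul_sum]
      rw [Finset.sum_comm]
      refine Finset.sum_eq_zero fun j _ => ?_
      simp only [← mul_assoc]
      rw [← Finset.sum_mul, hrΓ j, zero_mul]
    simp only [mul_sub, Finset.sum_sub_distrib, h3, ← Finset.sum_mul, hr1'] at h2
    rw [hs, Finset.mul_sum, ← hs]
    rw [zero_sub, one_mul] at h2
    rw [h2]
    exact Finset.sum_congr rfl fun i _ => by ring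
  by_cases hs0 : s = 0
  · have hΓv : Γ.map Complex.ofReal *ᵥ v = μ • v := by
      ext i
      have := hBv i
      rw [hs0, sub_zero] at this
      simpa [mulVec, dotProduct] using this
    rcases interconn_gersh Γ hI μ v hv0 hΓv with h | h
    · exact h
    exfalso
    subst h
    have hz : ∀ i, ∑ j, (Γ i j : ℂ) * v j = 0 := by
      intro i
      have := hBv i
      rw [hs0] at this
      simpa using this
    have hre : Γ *ᵥ (fun j => (v j).re) = 0 := by
      ext i
      have := congrArg Complex.re (hz i)
      simpa [mulVec, dotProduct] using this
    have him : Γ *ᵥ (fun j => (v j).im) = 0 := by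
      ext i
      have := congrArg Complex.im (hz i)
      simpa [mulVec, dotProduct] using this
    have hc : ∀ i, v i = v k := fun i => Complex.ext
      (interconn_const Γ hI k hk _ hre i) (interconn_const Γ hI k hk _ him i)
    apply hv0
    have hk0 : v k = 0 := by
      rw [← hs0, hs]
      simp only [hc, ← Finset.sum_mul, hr1', one_mul]
    ext i
    rw [hc i, hk0]; rfl
  · have : μ = -1 := by
      apply mul_right_cancel₀ hs0
      rw [← h1]; ring
    rw [this]; simp

theorem interconn_exp_decay {p : ℕ} (Γ : Matrix (Fin p) (Fin p) ℝ)
    (hΓ : IsConnectedInterconnection Γ)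
    (r : Fin p → ℝ) (hr : r ᵥ* Γ = 0) (hr1 : ∑ i, r i = 1) :
    ∃ ε : ℝ, 0 < ε ∧ Tendsto (fun t : ℝ => Real.exp (ε * t) •
      (NormedSpace.exp (t • Γ) - vecMulVec (fun _ => (1 : ℝ)) r)) atTop (𝓝 0) := by
  have hsp := deflated_spectrum Γ hΓ r hr hr1
  set Q : Matrix (Fin p) (Fin p) ℝ := vecMulVec (fun _ => (1 : ℝ)) r with hQ
  have hΓQ : Γ * Q = 0 := by
    ext i j
    simp [hQ, Matrix.mul_apply, vecMulVec_apply, ← Finset.sum_mul, hΓ.1.2 i]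
  have hQΓ : Q * Γ = 0 := by
    ext i j
    have := congrFun hr j
    simp only [vecMul, dotProduct, Pi.zero_apply] at this
    simp [hQ, Matrix.mul_apply, vecMulVec_apply, this]
  have hQQ : Q * Q = Q := by
    ext i j
    simp [hQ, Matrix.mul_apply, vecMulVec_apply, ← Finset.sum_mul, hr1]
  obtain ⟨ε, hε, hεs⟩ : ∃ ε : ℝ, 0 < ε ∧
      ∀ μ ∈ spectrum ℂ ((Γ - Q).map Complex.ofReal), μ.re < -ε := by
    have hfin := Matrix.finite_spectrum ((Γ - Q).map Complex.ofReal)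
    have h1 : ∀ᶠ ε : ℝ in 𝓝[>] 0,
        ∀ μ ∈ spectrum ℂ ((Γ - Q).map Complex.ofReal), μ.re < -ε := by
      rw [Filter.eventually_all_finite hfin]
      intro μ hμ
      have : (0 : ℝ) < -μ.re := by linarith [hsp μ hμ]
      filter_upwards [nhdsWithin_le_nhds (Iio_mem_nhds this)] with ε hε
      have : ε < -μ.re := hε
      linarith
    obtain ⟨ε, h2, h3⟩ := (h1.and self_mem_nhdsWithin).exists
    exact ⟨ε, h3, h2⟩
  refine ⟨ε, hε, ?_⟩
  have hdec := mexp_decay_real (Γ - Q) (-ε) hεs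
  have hdec2 := hdec.mul_const (1 - Q)
  rw [zero_mul] at hdec2
  refine hdec2.congr fun t => ?_
  have e1 : NormedSpace.exp (t • Γ) * Q = Q := by
    have := mexp_mul_congr (t • Γ) 0 Q (by
      intro k
      cases k with
      | zero => simp
      | succ k => simp [pow_succ, mul_assoc, hΓQ])
    rw [this, NormedSpace.exp_zero, one_mul]
  have e2 : NormedSpace.exp (t • Γ) * (1 - Q) = NormedSpace.exp (t • (Γ - Q)) * (1 - Q) := by
    refine mexp_mul_congr _ _ _ fun k => ?_
    induction k with
    | zero => simp
    | succ k ih =>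
      have a1 : (Γ - Q) * (1 - Q) = (1 - Q) * Γ := by
        simp [mul_sub, sub_mul, hΓQ, hQΓ, hQQ]
      have a2 : Γ * (1 - Q) = (1 - Q) * Γ := by
        simp [mul_sub, sub_mul, hΓQ, hQΓ]
      rw [pow_succ, pow_succ, mul_assoc, mul_assoc, smul_mul_assoc, smul_mul_assoc, a1, a2,
        mul_smul_comm, mul_smul_comm, ← mul_assoc, ← mul_assoc, ih]
  rw [neg_neg, smul_mul_assoc, ← e2, mul_sub, mul_one, e1]

theorem mexp_kron {p n : ℕ} (A : Matrix (Fin n) (Fin n) ℝ) (Γ : Matrix (Fin p) (Fin p) ℝ) :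
    NormedSpace.exp ((1 : Matrix (Fin p) (Fin p) ℝ) ⊗ₖ A + Γ ⊗ₖ (1 : Matrix (Fin n) (Fin n) ℝ))
      = NormedSpace.exp Γ ⊗ₖ NormedSpace.exp A := by
  have hc : Commute ((1 : Matrix (Fin p) (Fin p) ℝ) ⊗ₖ A)
      (Γ ⊗ₖ (1 : Matrix (Fin n) (Fin n) ℝ)) := by
    simp [Commute, SemiconjBy, ← mul_kronecker_mul]
  rw [Matrix.exp_add_of_commute _ _ hc]
  let f : Matrix (Fin n) (Fin n) ℝ →+* Matrix (Fin p × Fin n) (Fin p × Fin n) ℝ :=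
    { toFun := fun M => (1 : Matrix (Fin p) (Fin p) ℝ) ⊗ₖ M
      map_one' := one_kronecker_one
      map_mul' := fun a b => by rw [← mul_kronecker_mul, one_mul]
      map_zero' := kronecker_zero _
      map_add' := fun a b => kronecker_add _ _ _ }
  let g : Matrix (Fin p) (Fin p) ℝ →+* Matrix (Fin p × Fin n) (Fin p × Fin n) ℝ :=
    { toFun := fun M => M ⊗ₖ (1 : Matrix (Fin n) (Fin n) ℝ)
      map_one' := one_kronecker_one
      map_mul' := fun a b => by rw [← mul_kronecker_mul, one_mul]
      map_zero' := zero_kronecker _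
      map_add' := fun a b => add_kronecker _ _ _ }
  have hf := mexp_map f (by
    refine continuous_matrix fun i j => ?_
    change Continuous fun M : Matrix (Fin n) (Fin n) ℝ =>
      (1 : Matrix (Fin p) (Fin p) ℝ) i.1 j.1 * M i.2 j.2
    fun_prop) A
  have hg := mexp_map g (by
    refine continuous_matrix fun i j => ?_
    change Continuous fun M : Matrix (Fin p) (Fin p) ℝ =>
      M i.1 j.1 * (1 : Matrix (Fin n) (Fin n) ℝ) i.2 j.2
    fun_prop) Γ
  change (1 : Matrix (Fin p) (Fin p) ℝ) ⊗ₖ NormedSpace.exp A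
    = NormedSpace.exp ((1 : Matrix (Fin p) (Fin p) ℝ) ⊗ₖ A) at hf
  change NormedSpace.exp Γ ⊗ₖ (1 : Matrix (Fin n) (Fin n) ℝ)
    = NormedSpace.exp (Γ ⊗ₖ (1 : Matrix (Fin n) (Fin n) ℝ)) at hg
  rw [← hf, ← hg, ← mul_kronecker_mul, one_mul, mul_one]

theorem left_inv_one {n m : ℕ} (C : Matrix (Fin m) (Fin n) ℝ) (hrank : C.rank = n) :
    (Cᵀ * C)⁻¹ * Cᵀ * C = 1 := by
  have h1 : (Cᵀ * C).rank = n := by rw [rank_transpose_mul_self, hrank]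
  have h2 : IsUnit (Cᵀ * C) := by
    rw [← Matrix.mulVec_surjective_iff_isUnit]
    have : LinearMap.range (Cᵀ * C).mulVecLin = ⊤ := by
      apply Submodule.eq_top_of_finrank_eq
      rw [Module.finrank_fin_fun]
      exact h1
    exact LinearMap.range_eq_top.1 this
  rw [Matrix.mul_assoc, Matrix.nonsing_inv_mul _ ((Matrix.isUnit_iff_isUnit_det _).1 h2)]

/-- If no eigenvalue of `A` has positive real part and `C` has full column rank,
then the feedback law `L = (CᵀC)⁻¹Cᵀ` (so that `LC = I`) synchronizes the array for
every connected interconnection `Γ`: the solution `x(t) = exp(t(I_p ⊗ A + Γ ⊗ LC)) x(0)`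
converges to `(1rᵀ ⊗ exp(tA)) x(0)`, and each block synchronizes to
`x̄(t) = (rᵀ ⊗ exp(tA)) x(0)`. -/
theorem critically_unstable_full_rank_synchronizable
    (n m : ℕ) (A : Matrix (Fin n) (Fin n) ℝ) (C : Matrix (Fin m) (Fin n) ℝ)
    (hstab : ∀ μ ∈ spectrum ℂ (A.map Complex.ofReal), μ.re ≤ 0)
    (hrank : C.rank = n)
    (p : ℕ) (Γ : Matrix (Fin p) (Fin p) ℝ) (hΓ : IsConnectedInterconnection Γ)
    (r : Fin p → ℝ) (hr : r ᵥ* Γ = 0) (hr1 : ∑ i, r i = 1)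
    (x0 : Fin p × Fin n → ℝ) :
    Tendsto (fun t : ℝ =>
        NormedSpace.exp (t • ((1 : Matrix (Fin p) (Fin p) ℝ) ⊗ₖ A
            + Γ ⊗ₖ ((Cᵀ * C)⁻¹ * Cᵀ * C))) *ᵥ x0
          - (vecMulVec (fun _ => (1 : ℝ)) r ⊗ₖ NormedSpace.exp (t • A)) *ᵥ x0)
      atTop (nhds 0) ∧
    ∀ i : Fin p,
      Tendsto (fun t : ℝ => (fun k : Fin n =>
          (NormedSpace.exp (t • ((1 : Matrix (Fin p) (Fin p) ℝ) ⊗ₖ A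
              + Γ ⊗ₖ ((Cᵀ * C)⁻¹ * Cᵀ * C))) *ᵥ x0) (i, k)
            - ∑ j : Fin p, r j * (NormedSpace.exp (t • A) *ᵥ fun l => x0 (j, l)) k))
        atTop (nhds 0) := by
  have hfirst : Tendsto (fun t : ℝ =>
        NormedSpace.exp (t • ((1 : Matrix (Fin p) (Fin p) ℝ) ⊗ₖ A
            + Γ ⊗ₖ ((Cᵀ * C)⁻¹ * Cᵀ * C))) *ᵥ x0
          - (vecMulVec (fun _ => (1 : ℝ)) r ⊗ₖ NormedSpace.exp (t • A)) *ᵥ x0)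
      atTop (nhds 0) := by
    rw [left_inv_one C hrank]
    obtain ⟨ε, hε, hdec⟩ := interconn_exp_decay Γ hΓ r hr hr1
    have hA := mexp_decay_real A ε (fun μ hμ => (hstab μ hμ).trans_lt hε)
    have hK : Tendsto (fun t : ℝ =>
        (NormedSpace.exp (t • Γ) - vecMulVec (fun _ => (1 : ℝ)) r) ⊗ₖ NormedSpace.exp (t • A))
        atTop (𝓝 0) := by
      refine tendsto_pi_nhds.2 fun i => tendsto_pi_nhds.2 fun j => ?_
      have h1 := tendsto_pi_nhds.1 (tendsto_pi_nhds.1 hdec i.1) j.1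
      have h2 := tendsto_pi_nhds.1 (tendsto_pi_nhds.1 hA i.2) j.2
      have h3 := h1.mul h2
      simp only [Matrix.zero_apply, mul_zero] at h3
      refine h3.congr fun t => ?_
      have he : Real.exp (ε * t) * Real.exp (-ε * t) = 1 := by
        rw [← Real.exp_add]; simp
      simp only [Matrix.smul_apply, smul_eq_mul, kroneckerMap_apply]
      linear_combination ((NormedSpace.exp (t • Γ) - vecMulVec (fun _ => (1 : ℝ)) r :
        Matrix (Fin p) (Fin p) ℝ) i.1 j.1 *
        NormedSpace.exp (t • A) i.2 j.2) * he
    have hcont : Continuous fun M : Matrix (Fin p × Fin n) (Fin p × Fin n) ℝ => M *ᵥ x0 := by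
      fun_prop
    have h4 := (hcont.tendsto 0).comp hK
    rw [zero_mulVec] at h4
    refine h4.congr fun t => ?_
    have h5 : t • ((1 : Matrix (Fin p) (Fin p) ℝ) ⊗ₖ A + Γ ⊗ₖ (1 : Matrix (Fin n) (Fin n) ℝ))
        = (1 : Matrix (Fin p) (Fin p) ℝ) ⊗ₖ (t • A)
          + (t • Γ) ⊗ₖ (1 : Matrix (Fin n) (Fin n) ℝ) := by
      rw [smul_add, kronecker_smul, smul_kronecker]
    rw [h5, mexp_kron, ← sub_mulVec]
    simp only [Function.comp]
    congr 1
    ext i j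
    simp [kroneckerMap_apply, sub_mul]
  refine ⟨hfirst, fun i => tendsto_pi_nhds.2 fun k => ?_⟩
  refine (tendsto_pi_nhds.1 hfirst (i, k)).congr fun t => ?_
  rw [Pi.sub_apply]
  congr 1
  simp [mulVec, dotProduct, Fintype.sum_prod_type, kroneckerMap_apply, vecMulVec_apply,
    Finset.mul_sum, mul_assoc]
end

section
/- Let Γ ∈ ℝ^{p×p} satisfy Γ1 = 0, and let r ∈ ℝ^p satisfy rᵀΓ = 0 and rᵀ1 = 1. Then for every t ∈ ℝ, exp(t(Γ − 1rᵀ)) = exp(tΓ) − (1 − e^{−t}) 1rᵀ. -/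
open Matrix

theorem aux_pow {p : ℕ} (G P : Matrix (Fin p) (Fin p) ℝ) (h1 : G * P = 0) (h2 : P * G = 0)
    (h3 : P * P = P) (t : ℝ) (n : ℕ) :
    (t • (G - P)) ^ n = (t • G) ^ n + ((-t) ^ n - 0 ^ n) • P := by
  induction n with
  | zero => simp
  | succ n ih =>
    have h4 : (t • G) ^ n * P = (0 : ℝ) ^ n • P := by
      cases n with
      | zero => simp
      | succ n => rw [pow_succ, mul_assoc, smul_mul_assoc, h1]; simp
    rw [pow_succ, ih, pow_succ (t • G), smul_sub, add_mul, mul_sub, mul_sub, mul_smul_comm t _ P, h4]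
    simp only [smul_mul_assoc, mul_smul_comm, h2, h3, smul_zero]
    module

theorem aux_hasSum {p : ℕ} (A : Matrix (Fin p) (Fin p) ℝ) :
    HasSum (fun n : ℕ => ((n.factorial : ℝ)⁻¹) • A ^ n) (NormedSpace.exp A) := by
  let _ : NormedRing (Matrix (Fin p) (Fin p) ℝ) := Matrix.linftyOpNormedRing
  let _ : NormedAlgebra ℝ (Matrix (Fin p) (Fin p) ℝ) := Matrix.linftyOpNormedAlgebra
  exact NormedSpace.exp_series_hasSum_exp' (𝕂 := ℝ) A

/-- If `Γ1 = 0`, `rᵀΓ = 0` and `rᵀ1 = 1`, then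
`exp(t(Γ - 1rᵀ)) = exp(tΓ) - (1 - e^{-t}) 1rᵀ` for all `t`. -/
theorem exp_sub_one_rT
    (p : ℕ) (Γ : Matrix (Fin p) (Fin p) ℝ)
    (hΓ1 : Γ *ᵥ (fun _ => 1) = 0)
    (r : Fin p → ℝ) (hr : r ᵥ* Γ = 0) (hr1 : ∑ i, r i = 1) (t : ℝ) :
    NormedSpace.exp (t • (Γ - vecMulVec (fun _ => (1 : ℝ)) r)) =
      NormedSpace.exp (t • Γ)
        - (1 - Real.exp (-t)) • vecMulVec (fun _ => (1 : ℝ)) r := by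
  have h1 : Γ * vecMulVec (fun _ : Fin p => (1 : ℝ)) r = 0 := by
    rw [mul_vecMulVec, hΓ1]; simp
  have h2 : vecMulVec (fun _ : Fin p => (1 : ℝ)) r * Γ = 0 := by
    rw [vecMulVec_mul, hr]; simp
  have h3 : vecMulVec (fun _ : Fin p => (1 : ℝ)) r * vecMulVec (fun _ : Fin p => (1 : ℝ)) r
      = vecMulVec (fun _ : Fin p => (1 : ℝ)) r := by
    ext i j
    simp [Matrix.mul_apply, vecMulVec_apply, ← Finset.sum_mul, hr1]
  generalize vecMulVec (fun _ : Fin p => (1 : ℝ)) r = P at *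
  have hs (x : ℝ) : HasSum (fun n : ℕ => ((n.factorial : ℝ)⁻¹) • x ^ n) (Real.exp x) := by
    rw [Real.exp_eq_exp_ℝ]
    exact NormedSpace.exp_series_hasSum_exp' (𝕂 := ℝ) x
  have hc := ((hs (-t)).sub (hs 0)).smul_const P
  have := (aux_hasSum (t • Γ)).add hc
  have h5 := (aux_hasSum (t • (Γ - P))).unique (by
    convert! this using 2 with n
    rw [aux_pow Γ P h1 h2 h3, smul_add, smul_smul, smul_eq_mul, smul_eq_mul, mul_sub])
  rw [h5, Real.exp_zero]
  module
end
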